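/- Let d>0 and M>0 be arbitrary reals. There exists a positive integer ℓ such that with high probability over the choice of G∼G(n,d/n), there is no connected set S of vertices of G such that |S| ≤ M·log n and the tree-excess of the induced subgraph G[S] is more than ℓ. -/

import Mathlib

/-!
The proof is a first-moment bound. A connected graph with vertex set `S`, `|S| = s`, has a rooted
spanning tree given by a parent map `S → S` (send each vertex to a neighbour closer to the root),
so if its tree-excess exceeds `ℓ`, then its edges include the `s - 1` tree edges and `ℓ + 1` more
(`exists_mem_denseFamily`). There are at most `s ^ s` parent maps and `(s ^ 2) ^ (ℓ + 1)` choices of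
extra edges, and a fixed set of `s + ℓ` edges is present with probability `p ^ (s + ℓ)`
(`erProb_superset`). The crude count `s ^ s` is good enough: with `p = d / n`,
`n.choose s * s ^ s * p ^ (s + ℓ) ≤ (e * d) ^ s * (d / n) ^ ℓ` (`first_moment_le`).

For `s ≤ M * log n` the factor `(e * d) ^ s` is at most `n ^ c` with `c = M * (1 + log (d + 1))`, so
any `ℓ ≥ c + 1` bounds the total failure probability by a power of `log n` over `n`.
-/

open Classical Filter

/-- The degree of a vertex. -/
noncomputable def deg {V : Type*} (G : SimpleGraph V) (v : V) : ℕ :=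
  Nat.card {u : V // G.Adj v u}

/-- The number of edges of a graph. -/
noncomputable def edgeCount {V : Type*} (G : SimpleGraph V) : ℕ :=
  Nat.card G.edgeSet

/-- The probability that the Erdős–Rényi random graph `G(n,p)` satisfies property `P`:
each of the `n(n-1)/2` possible edges is present independently with probability `p`. -/
noncomputable def erProb (n : ℕ) (p : ℝ) (P : SimpleGraph (Fin n) → Prop) : ℝ :=
  ∑ G : SimpleGraph (Fin n),
    (if P G then p ^ edgeCount G * (1 - p) ^ (n.choose 2 - edgeCount G) else 0)

/-- The number of edges of `G` with all endpoints inside `S`. -/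
noncomputable def edgesWithin {V : Type*} (G : SimpleGraph V) (S : Set V) : ℕ :=
  Nat.card {e : Sym2 V // e ∈ G.edgeSet ∧ ∀ x ∈ e, x ∈ S}

/-! ### Spanning trees and dense edge sets -/

/-- Breadth-first parents: every vertex other than the root has a neighbour closer to the root. -/
lemma exists_parent {W : Type*} (H : SimpleGraph W) (hH : H.Connected) (r : W) :
    ∃ f : W → W, f r = r ∧ ∀ v, v ≠ r → H.Adj v (f v) ∧ H.dist (f v) r < H.dist v r := by
  have key : ∀ v, v ≠ r → ∃ w, H.Adj v w ∧ H.dist w r < H.dist v r := by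
    intro v hv
    obtain ⟨p, hp⟩ := hH.exists_walk_length_eq_dist v r
    cases p with
    | nil => exact absurd rfl hv
    | cons h q =>
      refine ⟨_, h, ?_⟩
      rw [← hp, SimpleGraph.Walk.length_cons]
      exact Nat.lt_succ_of_le (SimpleGraph.dist_le q)
  choose! g hg using key
  refine ⟨fun v => if v = r then r else g v, by simp, fun v hv => ?_⟩
  simpa [hv] using hg v hv

/-- The edges `{v, f v}` of a parent map `f` on `S`; fixed points of `f` (the roots) give none. -/
noncomputable def parentEdges {n : ℕ} {S : Finset (Fin n)} (f : S → S) :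
    Finset (Sym2 (Fin n)) :=
  (Finset.univ.image fun v : S => s(v.1, (f v).1)).filter fun e => ¬ e.IsDiag

/-- The edge sets of size `|S| + ℓ` inside `S` of the form: edges of a parent map on `S`, together
with `ℓ + 1` further pairs. -/
noncomputable def denseFamily {n : ℕ} (S : Finset (Fin n)) (ℓ : ℕ) :
    Finset (Finset (Sym2 (Fin n))) :=
  (((Finset.univ : Finset (S → S)) ×ˢ S.sym2.powersetCard (ℓ + 1)).image
    fun q => parentEdges q.1 ∪ q.2).filter
      fun F => F.card = S.card + ℓ ∧ ∀ e ∈ F, ¬ e.IsDiag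

lemma card_denseFamily_le {n : ℕ} (S : Finset (Fin n)) (ℓ : ℕ) :
    (denseFamily S ℓ).card ≤ S.card ^ S.card * (S.card ^ 2) ^ (ℓ + 1) := by
  refine (Finset.card_filter_le _ _).trans (Finset.card_image_le.trans ?_)
  rw [Finset.card_product, Finset.card_powersetCard, Finset.card_sym2]
  refine Nat.mul_le_mul (by simp) ?_
  refine (Nat.choose_le_pow _ _).trans (Nat.pow_le_pow_left ?_ _)
  rw [Nat.choose_two_right]
  apply Nat.div_le_of_le_mul
  simp only [Nat.add_sub_cancel]
  nlinarith [Nat.le_self_pow two_ne_zero S.card]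

/-- A connected `S` of tree-excess more than `ℓ` contains a member of `denseFamily S ℓ`. -/
lemma exists_mem_denseFamily {n : ℕ} (G : SimpleGraph (Fin n)) (S : Finset (Fin n)) (ℓ : ℕ)
    (hc : (G.induce (S : Set (Fin n))).Connected)
    (he : S.card + ℓ < edgesWithin G (S : Set (Fin n)) + 1) :
    ∃ F ∈ denseFamily S ℓ, (F : Set (Sym2 (Fin n))) ⊆ G.edgeSet := by
  obtain ⟨r⟩ := hc.nonempty
  obtain ⟨f, hfr, hf⟩ := exists_parent _ hc r
  set E : Finset (Sym2 (Fin n)) :=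
    Finset.univ.filter fun e => e ∈ G.edgeSet ∧ ∀ x ∈ e, x ∈ (S : Set (Fin n)) with hE
  have hEc : edgesWithin G (S : Set (Fin n)) = E.card := by
    rw [edgesWithin, Nat.card_eq_fintype_card, Fintype.card_subtype]
  let f' : S → S := f
  let r' : S := r
  have hf' : ∀ v : S, v ≠ r' → G.Adj v.1 (f' v).1 := fun v hv => (hf v hv).1
  have hT : parentEdges f' = (Finset.univ.erase r').image fun v : S => s(v.1, (f' v).1) := by
    ext e
    simp only [parentEdges, Finset.mem_filter, Finset.mem_image, Finset.mem_univ, true_and,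
      Finset.mem_erase, and_true]
    constructor
    · rintro ⟨⟨v, rfl⟩, hd⟩
      refine ⟨v, ?_, rfl⟩
      rintro rfl
      have : f' v = v := hfr
      exact hd (by simp [this])
    · rintro ⟨v, hv, rfl⟩
      exact ⟨⟨v, rfl⟩, by simpa using (hf' v hv).ne⟩
  have hTc : (parentEdges f').card + 1 = S.card := by
    rw [hT, Finset.card_image_of_injOn, Finset.card_erase_of_mem (Finset.mem_univ _)]
    · have : 0 < S.card := Finset.card_pos.mpr ⟨_, r'.2⟩
      simp only [Finset.card_univ, Fintype.card_coe]
      omega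
    · intro v hv w hw hvw
      have hv : v ≠ r' := by simpa using hv
      have hw : w ≠ r' := by simpa using hw
      rcases Sym2.eq_iff.mp hvw with ⟨h, -⟩ | ⟨h1, h2⟩
      · exact Subtype.ext h
      -- Two distinct vertices cannot each be the parent of the other, as parents are closer to `r`.
      · exfalso
        have h1 : v = f' w := Subtype.ext h1
        have h2 : f' v = w := Subtype.ext h2
        have a := (hf v hv).2
        have b := (hf w hw).2
        change SimpleGraph.dist _ (f' v) r < SimpleGraph.dist _ v r at a
        change SimpleGraph.dist _ (f' w) r < SimpleGraph.dist _ w r at b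
        rw [h2] at a
        rw [← h1] at b
        exact lt_asymm a b
  have hTE : parentEdges f' ⊆ E := by
    rw [hT]
    intro e he
    obtain ⟨v, hv, rfl⟩ := Finset.mem_image.mp he
    have hv : v ≠ r' := by simpa using hv
    rw [hE, Finset.mem_filter]
    refine ⟨Finset.mem_univ _, hf' v hv, fun x hx => ?_⟩
    rcases Sym2.mem_iff.mp hx with rfl | rfl
    · exact v.2
    · exact (f' v).2
  obtain ⟨X, hX, hXc⟩ : ∃ X ⊆ E \ parentEdges f', X.card = ℓ + 1 := by
    apply Finset.exists_subset_card_eq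
    rw [Finset.card_sdiff_of_subset hTE]
    omega
  have hXE : X ⊆ E := hX.trans Finset.sdiff_subset
  have hU : parentEdges f' ∪ X ⊆ E := Finset.union_subset hTE hXE
  have hUG : ∀ e ∈ parentEdges f' ∪ X, e ∈ G.edgeSet := fun e h =>
    ((Finset.mem_filter.mp (hU h)).2).1
  refine ⟨parentEdges f' ∪ X, ?_, fun e h => hUG e (Finset.mem_coe.mp h)⟩
  rw [denseFamily, Finset.mem_filter]
  refine ⟨Finset.mem_image.mpr ⟨(f', X), ?_, rfl⟩, ?_, fun e h => G.not_isDiag_of_mem_edgeSet (hUG e h)⟩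
  · rw [Finset.mem_product, Finset.mem_powersetCard]
    refine ⟨Finset.mem_univ _, fun e h => ?_, hXc⟩
    rw [Finset.mem_sym2_iff]
    exact fun x hx => ((Finset.mem_filter.mp (hXE h)).2).2 x hx
  · rw [Finset.card_union_of_disjoint, hXc]
    · omega
    · exact (Finset.disjoint_of_subset_left hX Finset.sdiff_disjoint).symm

/-! ### Probabilities in `G(n, p)` -/

lemma erProb_nonneg {n : ℕ} {p : ℝ} (h0 : 0 ≤ p) (h1 : p ≤ 1)
    (P : SimpleGraph (Fin n) → Prop) : 0 ≤ erProb n p P := by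
  have : 0 ≤ 1 - p := by linarith
  refine Finset.sum_nonneg fun G _ => ?_
  split_ifs <;> positivity

/-- The union bound. -/
lemma erProb_le_sum {n : ℕ} {p : ℝ} (h0 : 0 ≤ p) (h1 : p ≤ 1) {ι : Type*} (I : Finset ι)
    (P : SimpleGraph (Fin n) → Prop) (Q : ι → SimpleGraph (Fin n) → Prop)
    (h : ∀ G, P G → ∃ i ∈ I, Q i G) : erProb n p P ≤ ∑ i ∈ I, erProb n p (Q i) := by
  have h2 : 0 ≤ 1 - p := by linarith
  unfold erProb
  rw [Finset.sum_comm]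
  refine Finset.sum_le_sum fun G _ => ?_
  have hn : ∀ i ∈ I, (0 : ℝ) ≤ if Q i G then
      p ^ edgeCount G * (1 - p) ^ (n.choose 2 - edgeCount G) else 0 := by
    intro i _
    split_ifs <;> positivity
  by_cases hP : P G
  · obtain ⟨i, hi, hQ⟩ := h G hP
    refine le_trans ?_ (Finset.single_le_sum hn hi)
    simp [hP, hQ]
  · simpa [hP] using Finset.sum_nonneg hn

/-- A fixed set of `k` edges is present with probability `p ^ k`: the remaining edges contribute
`(p + (1 - p)) ^ (n.choose 2 - k) = 1` by the binomial theorem. -/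
lemma erProb_superset {n : ℕ} (p : ℝ) (F : Finset (Sym2 (Fin n))) (hF : ∀ e ∈ F, ¬ e.IsDiag) :
    erProb n p (fun G => (F : Set (Sym2 (Fin n))) ⊆ G.edgeSet) = p ^ F.card := by
  set U : Finset (Sym2 (Fin n)) := Finset.univ.filter fun e => ¬ e.IsDiag with hU
  have hUc : U.card = n.choose 2 := by
    rw [hU, ← Fintype.card_subtype, Sym2.card_subtype_not_diag, Fintype.card_fin]
  have hFU : F ⊆ U := fun e he => by simpa [hU] using hF e he
  have hec : ∀ G : SimpleGraph (Fin n), edgeCount G = G.edgeSet.toFinset.card := by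
    intro G
    rw [edgeCount, Nat.card_eq_fintype_card, Set.toFinset_card]
  have h1 : p ^ F.card = ∑ t ∈ (U \ F).powerset,
      p ^ (t.card + F.card) * (1 - p) ^ (n.choose 2 - (t.card + F.card)) := by
    have h := Finset.sum_pow_mul_eq_add_pow p (1 - p) (U \ F)
    rw [show p + (1 - p) = 1 by ring, one_pow] at h
    have h' := congrArg (p ^ F.card * ·) h
    simp only [mul_one, Finset.mul_sum] at h'
    rw [← h']
    refine Finset.sum_congr rfl fun t _ => ?_
    rw [Finset.card_sdiff_of_subset hFU, hUc, pow_add, Nat.sub_sub, Nat.add_comm F.card]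
    ring
  rw [h1, erProb, ← Finset.sum_filter]
  refine Finset.sum_bij' (fun G _ => G.edgeSet.toFinset \ F)
    (fun t _ => SimpleGraph.fromEdgeSet ((t ∪ F : Finset _) : Set (Sym2 (Fin n)))) ?_ ?_ ?_ ?_ ?_
  · intro G _
    rw [Finset.mem_powerset]
    refine Finset.sdiff_subset_sdiff (fun e he => ?_) subset_rfl
    simpa [hU] using G.not_isDiag_of_mem_edgeSet (Set.mem_toFinset.mp he)
  · intro t _
    rw [Finset.mem_filter]
    refine ⟨Finset.mem_univ _, fun e he => ?_⟩
    rw [SimpleGraph.edgeSet_fromEdgeSet]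
    exact ⟨by simp [Finset.mem_coe.mp he], hF e he⟩
  · intro G hG
    have hG : (F : Set (Sym2 (Fin n))) ⊆ G.edgeSet := (Finset.mem_filter.mp hG).2
    have : ((G.edgeSet.toFinset \ F ∪ F : Finset _) : Set (Sym2 (Fin n))) = G.edgeSet := by
      simp [Set.union_eq_left.mpr hG]
    simp only [this, SimpleGraph.fromEdgeSet_edgeSet]
  · intro t ht
    have ht := Finset.mem_powerset.mp ht
    ext e
    simp only [SimpleGraph.edgeSet_fromEdgeSet, Finset.mem_sdiff, Set.mem_toFinset, Set.mem_sdiff,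
      Finset.mem_coe, Finset.mem_union]
    constructor
    · tauto
    · intro h
      have h' := Finset.mem_sdiff.mp (ht h)
      exact ⟨⟨Or.inl h, (Finset.mem_filter.mp h'.1).2⟩, h'.2⟩
  · intro G hG
    have hG : (F : Set (Sym2 (Fin n))) ⊆ G.edgeSet := (Finset.mem_filter.mp hG).2
    have : (G.edgeSet.toFinset \ F).card + F.card = edgeCount G := by
      rw [hec]
      exact Finset.card_sdiff_add_card_eq_card fun e he => by simpa using hG he
    rw [this]

lemma erProb_not {n : ℕ} (p : ℝ) (P : SimpleGraph (Fin n) → Prop) :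
    erProb n p (fun G => ¬ P G) = 1 - erProb n p P := by
  have h := erProb_superset (n := n) p ∅ (by simp)
  simp only [Finset.coe_empty, Set.empty_subset, Finset.card_empty, pow_zero] at h
  rw [← h, eq_sub_iff_add_eq]
  unfold erProb
  rw [← Finset.sum_add_distrib]
  refine Finset.sum_congr rfl fun G _ => ?_
  by_cases hP : P G <;> simp [hP]

lemma erProb_dense_le {n : ℕ} {p : ℝ} (h0 : 0 ≤ p) (h1 : p ≤ 1) (S : Finset (Fin n)) (ℓ : ℕ) :
    erProb n p (fun G => (G.induce (S : Set (Fin n))).Connected ∧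
      S.card + ℓ < edgesWithin G (S : Set (Fin n)) + 1) ≤
      (S.card : ℝ) ^ S.card * ((S.card : ℝ) ^ 2) ^ (ℓ + 1) * p ^ (S.card + ℓ) := by
  refine (erProb_le_sum h0 h1 (denseFamily S ℓ) _
    (fun F G => (F : Set (Sym2 (Fin n))) ⊆ G.edgeSet)
    fun G hG => exists_mem_denseFamily G S ℓ hG.1 hG.2).trans ?_
  rw [Finset.sum_congr rfl (g := fun _ => p ^ (S.card + ℓ))]
  · rw [Finset.sum_const, nsmul_eq_mul]
    refine mul_le_mul_of_nonneg_right ?_ (pow_nonneg h0 _)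
    exact_mod_cast card_denseFamily_le S ℓ
  · intro F hF
    have h := (Finset.mem_filter.mp hF).2
    rw [erProb_superset p F h.2, h.1]

/-! ### The first-moment estimate -/

/-- First-moment bound over all vertex sets of a given size; the factor `s ^ s` coming from parent
maps is absorbed by the `s!` in `n.choose s ≤ n ^ s / s!`, via `s ^ s / s! ≤ e ^ s`. -/
lemma first_moment_le {n : ℕ} (hn : 0 < n) {d : ℝ} (hd : 0 < d) (s ℓ : ℕ) :
    (n.choose s : ℝ) * ((s : ℝ) ^ s * ((s : ℝ) ^ 2) ^ (ℓ + 1) * (d / n) ^ (s + ℓ)) ≤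
      (Real.exp 1 * d) ^ s * (s : ℝ) ^ (2 * ℓ + 2) * (d / n) ^ ℓ := by
  have hn' : (0 : ℝ) < n := by exact_mod_cast hn
  have hc : (n.choose s : ℝ) ≤ (n : ℝ) ^ s / s.factorial := Nat.choose_le_pow_div s n
  have hs : (s : ℝ) ^ s / s.factorial ≤ Real.exp 1 ^ s := by
    rw [← Real.exp_nat_mul, mul_one]
    exact Real.pow_div_factorial_le_exp _ (Nat.cast_nonneg s) s
  calc _ ≤ (n : ℝ) ^ s / s.factorial *
        ((s : ℝ) ^ s * ((s : ℝ) ^ 2) ^ (ℓ + 1) * (d / n) ^ (s + ℓ)) := by gcongr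
    _ = ((s : ℝ) ^ s / s.factorial) * (d ^ s * (s : ℝ) ^ (2 * ℓ + 2) * (d / n) ^ ℓ) := by
        rw [pow_add (d / (n : ℝ)), ← pow_mul, show 2 * (ℓ + 1) = 2 * ℓ + 2 by ring, div_pow d _ s]
        field_simp
    _ ≤ Real.exp 1 ^ s * (d ^ s * (s : ℝ) ^ (2 * ℓ + 2) * (d / n) ^ ℓ) := by gcongr
    _ = _ := by rw [mul_pow]; ring

lemma erProb_bad_le {n : ℕ} (hn : 0 < n) {d : ℝ} (hd : 0 < d) (hdn : d ≤ n) (L : ℝ) (hL : 0 ≤ L)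
    (ℓ : ℕ) :
    erProb n (d / n) (fun G => ∃ S : Finset (Fin n), (G.induce (S : Set (Fin n))).Connected ∧
      (S.card : ℝ) ≤ L ∧ S.card + ℓ < edgesWithin G (S : Set (Fin n)) + 1) ≤
    L ^ (2 * ℓ + 3) * Real.exp (L * (1 + Real.log (d + 1))) * (d / n) ^ ℓ := by
  have hn' : (0 : ℝ) < n := by exact_mod_cast hn
  have h0 : 0 ≤ d / n := by positivity
  have h1 : d / n ≤ 1 := (div_le_one hn').mpr hdn
  have hstep : ∀ s ∈ Finset.Icc 1 ⌊L⌋₊, ∑ S ∈ (Finset.univ : Finset (Fin n)).powersetCard s,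
      erProb n (d / n) (fun G => (G.induce (S : Set (Fin n))).Connected ∧
        S.card + ℓ < edgesWithin G (S : Set (Fin n)) + 1) ≤
      Real.exp (L * (1 + Real.log (d + 1))) * L ^ (2 * ℓ + 2) * (d / n) ^ ℓ := by
    intro s hs
    have hsL : (s : ℝ) ≤ L := (Nat.le_floor_iff hL).mp (Finset.mem_Icc.mp hs).2
    have hlog : 0 ≤ Real.log (d + 1) := Real.log_nonneg (by linarith)
    calc _ ≤ ∑ S ∈ (Finset.univ : Finset (Fin n)).powersetCard s,
          ((s : ℝ) ^ s * ((s : ℝ) ^ 2) ^ (ℓ + 1) * (d / n) ^ (s + ℓ)) := by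
          refine Finset.sum_le_sum fun S hS => ?_
          have := erProb_dense_le h0 h1 S ℓ
          rwa [(Finset.mem_powersetCard.mp hS).2] at this ⊢
      _ = (n.choose s : ℝ) * ((s : ℝ) ^ s * ((s : ℝ) ^ 2) ^ (ℓ + 1) * (d / n) ^ (s + ℓ)) := by
          rw [Finset.sum_const, Finset.card_powersetCard, Finset.card_univ, Fintype.card_fin,
            nsmul_eq_mul]
      _ ≤ (Real.exp 1 * d) ^ s * (s : ℝ) ^ (2 * ℓ + 2) * (d / n) ^ ℓ := first_moment_le hn hd s ℓ
      _ ≤ Real.exp (L * (1 + Real.log (d + 1))) * L ^ (2 * ℓ + 2) * (d / n) ^ ℓ := by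
          gcongr
          calc (Real.exp 1 * d) ^ s ≤ (Real.exp 1 * (d + 1)) ^ s := by gcongr; linarith
            _ = Real.exp (s * (1 + Real.log (d + 1))) := by
                rw [Real.exp_nat_mul, Real.exp_add, Real.exp_log (by linarith)]
            _ ≤ _ := by gcongr
  refine (erProb_le_sum h0 h1 (Finset.Icc 1 ⌊L⌋₊) _
    (fun s G => ∃ S ∈ (Finset.univ : Finset (Fin n)).powersetCard s,
      (G.induce (S : Set (Fin n))).Connected ∧
        S.card + ℓ < edgesWithin G (S : Set (Fin n)) + 1) ?_).trans ?_
  · rintro G ⟨S, hc, hSL, he⟩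
    obtain ⟨r⟩ := hc.nonempty
    refine ⟨S.card, Finset.mem_Icc.mpr ⟨Finset.card_pos.mpr ⟨r.1, r.2⟩, Nat.le_floor hSL⟩, S, ?_,
      hc, he⟩
    simp
  · calc _ ≤ ∑ s ∈ Finset.Icc 1 ⌊L⌋₊,
          Real.exp (L * (1 + Real.log (d + 1))) * L ^ (2 * ℓ + 2) * (d / n) ^ ℓ :=
          Finset.sum_le_sum fun s hs =>
            (erProb_le_sum h0 h1 _ _ _ fun G h => h).trans (hstep s hs)
      _ = ⌊L⌋₊ * (Real.exp (L * (1 + Real.log (d + 1))) * L ^ (2 * ℓ + 2) * (d / n) ^ ℓ) := by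
          simp
      _ ≤ L * (Real.exp (L * (1 + Real.log (d + 1))) * L ^ (2 * ℓ + 2) * (d / n) ^ ℓ) := by
          gcongr
          exact Nat.floor_le hL
      _ = _ := by ring

/-- for any `d, M > 0` there is a positive integer `ℓ` such that whp over
`G ∼ G(n,d/n)` there is no connected vertex set `S` with `|S| ≤ M log n` whose induced
subgraph has tree-excess more than `ℓ`. -/
theorem stmt14 (d M : ℝ) (hd : 0 < d) (hM : 0 < M) :
    ∃ ℓ : ℕ, 0 < ℓ ∧
      Filter.Tendsto (fun n : ℕ => erProb n (d / n) (fun G =>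
          ¬ ∃ S : Finset (Fin n), (G.induce (S : Set (Fin n))).Connected ∧
              (S.card : ℝ) ≤ M * Real.log n ∧
              S.card + ℓ < edgesWithin G (S : Set (Fin n)) + 1))
        Filter.atTop (nhds 1) := by
  set c : ℝ := M * (1 + Real.log (d + 1)) with hcdef
  -- `ℓ ≥ c + 1` makes the bound `n ^ c * (d / n) ^ ℓ * polylog n` at most `polylog n / n`.
  set ℓ : ℕ := ⌈c⌉₊ + 1 with hℓ
  have hcℓ : c + 1 ≤ (ℓ : ℝ) := by
    rw [hℓ]; push_cast; linarith [Nat.le_ceil c]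
  refine ⟨ℓ, Nat.succ_pos _, ?_⟩
  have hlim : Tendsto (fun n : ℕ => 1 - M ^ (2 * ℓ + 3) * d ^ ℓ *
      (Real.log n ^ (2 * ℓ + 3) / n)) atTop (nhds 1) := by
    have h := (isLittleO_log_rpow_rpow_atTop (s := 1) (2 * ℓ + 3 : ℕ) one_pos).tendsto_div_nhds_zero
    have h := (h.comp tendsto_natCast_atTop_atTop).const_mul (M ^ (2 * ℓ + 3) * d ^ ℓ)
    simpa only [Function.comp_def, Real.rpow_natCast, Real.rpow_one, mul_zero, sub_zero] using
      h.const_sub 1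
  obtain ⟨N, hN⟩ := exists_nat_ge d
  refine tendsto_of_tendsto_of_tendsto_of_le_of_le' hlim tendsto_const_nhds ?_ ?_
  · filter_upwards [eventually_ge_atTop N, eventually_ge_atTop 1] with n hnN hn1
    have hn' : (0 : ℝ) < n := by exact_mod_cast hn1
    have hn1' : (1 : ℝ) ≤ n := by exact_mod_cast hn1
    have hlog : 0 ≤ Real.log n := Real.log_nonneg hn1'
    have hdn : d ≤ n := hN.trans (by exact_mod_cast hnN)
    rw [erProb_not]
    refine sub_le_sub_left ((erProb_bad_le hn1 hd hdn _ (by positivity) ℓ).trans ?_) 1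
    have hexp : Real.exp (M * Real.log n * (1 + Real.log (d + 1))) ≤ (n : ℝ) ^ ℓ / n := by
      have : (n : ℝ) ^ ℓ / n = Real.exp (Real.log n * (ℓ - 1)) := by
        rw [mul_sub, mul_one, Real.exp_sub, Real.exp_log hn', mul_comm, Real.exp_nat_mul,
          Real.exp_log hn']
      rw [this, Real.exp_le_exp]
      calc _ = Real.log n * c := by rw [hcdef]; ring
        _ ≤ _ := by gcongr; linarith
    calc _ ≤ (M * Real.log n) ^ (2 * ℓ + 3) * ((n : ℝ) ^ ℓ / n) * (d / n) ^ ℓ := by gcongr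
      _ = _ := by
        rw [mul_pow, div_pow]
        field_simp
  · filter_upwards [eventually_ge_atTop N, eventually_ge_atTop 1] with n hnN hn1
    have hn' : (0 : ℝ) < n := by exact_mod_cast hn1
    have hdn : d ≤ n := hN.trans (by exact_mod_cast hnN)
    rw [erProb_not]
    linarith [erProb_nonneg (n := n) (p := d / n) (by positivity) ((div_le_one hn').mpr hdn)
      (fun G => ∃ S : Finset (Fin n), (G.induce (S : Set (Fin n))).Connected ∧
              (S.card : ℝ) ≤ M * Real.log n ∧
              S.card + ℓ < edgesWithin G (S : Set (Fin n)) + 1)]
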